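/- Let α ≥ β ≥ γ ≥ 1 be integers and let G be the group presented by ⟨a,b | a^(2^α) = b^(2^β) = [a,b]^(2^γ) = [a,b,a] = [a,b,b] = e⟩ (coproduct type). Then G is capable if and only if α = β, or α = β + 1 and γ = β. -/

import Mathlib

/-- The paper's commutator convention: `[x,y] = x⁻¹y⁻¹xy`. -/
def pcomm {G : Type*} [Group G] (x y : G) : G := x⁻¹ * y⁻¹ * x * y

/-- A group is capable if it is isomorphic to `K/Z(K)` for some group `K`. -/
def IsCapable (G : Type*) [Group G] : Prop :=
  ∃ (K : Type) (_ : Group K), Nonempty ((K ⧸ Subgroup.center K) ≃* G)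

/-- Relators of the type (i) (coproduct type) presentation
`⟨a,b | a^(2^α) = b^(2^β) = [a,b]^(2^γ) = [a,b,a] = [a,b,b] = e⟩`. -/
def relsI (α β γ : ℕ) : Set (FreeGroup (Fin 2)) :=
  let a : FreeGroup (Fin 2) := FreeGroup.of 0
  let b : FreeGroup (Fin 2) := FreeGroup.of 1
  {a ^ 2 ^ α, b ^ 2 ^ β, pcomm a b ^ 2 ^ γ,
    pcomm (pcomm a b) a, pcomm (pcomm a b) b}

section CapAux

open Polynomial

theorem pcomm_eq_of {G : Type*} [Group G] {x y c : G} (h : x * y = y * x * c) :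
    pcomm x y = c := by
  unfold pcomm
  have : c = (y * x)⁻¹ * (x * y) := by rw [h]; group
  rw [this]; group

theorem mul_pcomm {G : Type*} [Group G] (x y : G) : x * y = y * x * pcomm x y := by
  unfold pcomm; group

theorem two_mul_choose_two (n : ℕ) : 2 * ((n.choose 2 : ℕ) : ℤ) = n * (n - 1) := by
  induction n with
  | zero => simp
  | succ n ih =>
    rw [Nat.choose_succ_succ' n 1]
    push_cast
    simp only [Nat.choose_one_right]
    linarith

/-! ### Necessity -/

theorem pow_mul_of_comm {K : Type*} [Group K] {c y v : K} (hv : ∀ g, v * g = g * v)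
    (h : c * y = y * c * v) (n : ℕ) : c ^ n * y = y * c ^ n * v ^ n := by
  induction n with
  | zero => simp
  | succ n ih =>
    calc c ^ (n + 1) * y = c ^ n * (c * y) := by rw [pow_succ]; group
      _ = (c ^ n * y) * c * v := by rw [h]; group
      _ = y * c ^ n * (v ^ n * c) * v := by rw [ih]; group
      _ = y * c ^ n * (c * v ^ n) * v := by
        rw [(Commute.pow_left (hv c : Commute v c) n).eq]
      _ = _ := by rw [pow_succ, pow_succ]; group

theorem mul_pow_right' {K : Type*} [Group K] {x y c v : K} (hv : ∀ g, v * g = g * v)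
    (h : x * y = y * x * c) (hc : c * y = y * c * v) (n : ℕ) :
    x * y ^ n = y ^ n * x * (c ^ n * v ^ n.choose 2) := by
  induction n with
  | zero => simp
  | succ n ih =>
    have e : (n + 1).choose 2 = n + n.choose 2 := by
      rw [Nat.choose_succ_succ' n 1]; simp
    have hp : ∀ k : ℕ, ∀ g, v ^ k * g = g * v ^ k := fun k g =>
      (Commute.pow_left (hv g : Commute v g) k).eq
    calc x * y ^ (n + 1) = (x * y ^ n) * y := by rw [pow_succ]; group
      _ = y ^ n * x * c ^ n * (v ^ n.choose 2 * y) := by rw [ih]; group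
      _ = y ^ n * x * (c ^ n * y) * v ^ n.choose 2 := by rw [hp]; group
      _ = y ^ n * (x * y) * c ^ n * v ^ n * v ^ n.choose 2 := by
        rw [pow_mul_of_comm hv hc]; group
      _ = y ^ n * y * x * (c * c ^ n) * (v ^ n * v ^ n.choose 2) := by rw [h]; group
      _ = _ := by rw [← pow_succ', ← pow_succ, ← pow_add, e]; group

theorem pow_mul_left' {K : Type*} [Group K] {x y c u : K} (hu : ∀ g, u * g = g * u)
    (h : x * y = y * x * c) (hc : c * x = x * c * u) (n : ℕ) :
    x ^ n * y = y * x ^ n * (c ^ n * u ^ n.choose 2) := by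
  have hp : ∀ k : ℕ, ∀ g, u ^ k * g = g * u ^ k := fun k g =>
    (Commute.pow_left (hu g : Commute u g) k).eq
  induction n with
  | zero => simp
  | succ n ih =>
    have e : (n + 1).choose 2 = n + n.choose 2 := by
      rw [Nat.choose_succ_succ' n 1]; simp
    calc x ^ (n + 1) * y = x ^ n * (x * y) := by rw [pow_succ]; group
      _ = (x ^ n * y) * x * c := by rw [h]; group
      _ = y * x ^ n * c ^ n * (u ^ n.choose 2 * (x * c)) := by rw [ih]; group
      _ = y * x ^ n * (c ^ n * x) * c * u ^ n.choose 2 := by rw [hp]; group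
      _ = y * x ^ n * x * c ^ n * (u ^ n * c) * u ^ n.choose 2 := by
        rw [pow_mul_of_comm hu hc]; group
      _ = y * (x ^ n * x) * (c ^ n * c) * (u ^ n * u ^ n.choose 2) := by rw [hp]; group
      _ = _ := by rw [← pow_succ, ← pow_succ, ← pow_add, e]; group

theorem choose_two_pow_dvd {γ β : ℕ} (h : γ < β) : 2 ^ γ ∣ (2 ^ β).choose 2 := by
  obtain ⟨d, rfl⟩ : ∃ d, β = γ + d + 1 := ⟨β - γ - 1, by omega⟩
  have h1 := two_mul_choose_two (2 ^ (γ + d + 1))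
  have h2 : ((2 ^ γ : ℕ) : ℤ) ∣ (((2 ^ (γ + d + 1)).choose 2 : ℕ) : ℤ) := by
    refine ⟨2 ^ d * (2 ^ (γ + d + 1) - 1), ?_⟩
    push_cast at h1 ⊢
    have : (2 : ℤ) ^ (γ + d + 1) = 2 * (2 ^ γ * 2 ^ d) := by ring
    rw [this] at h1 ⊢
    linarith
  exact_mod_cast h2

theorem dvd_choose_two_two_mul (m : ℕ) : m ∣ (2 * m).choose 2 := by
  have h1 := two_mul_choose_two (2 * m)
  have h2 : (m : ℤ) ∣ (((2 * m).choose 2 : ℕ) : ℤ) := by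
    refine ⟨2 * m - 1, ?_⟩
    push_cast at h1
    linarith
  exact_mod_cast h2

theorem dvd_two_mul_choose_two (m : ℕ) : m ∣ 2 * m.choose 2 := by
  have h1 := two_mul_choose_two m
  have h2 : (m : ℤ) ∣ ((2 * m.choose 2 : ℕ) : ℤ) := ⟨m - 1, by push_cast; linarith⟩
  exact_mod_cast h2

/-- The generators of the presented group. -/
theorem presented_rels (α β γ : ℕ) :
    let a : PresentedGroup (relsI α β γ) := PresentedGroup.of 0
    let b : PresentedGroup (relsI α β γ) := PresentedGroup.of 1
    a ^ 2 ^ α = 1 ∧ b ^ 2 ^ β = 1 ∧ pcomm a b ^ 2 ^ γ = 1 ∧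
      pcomm (pcomm a b) a = 1 ∧ pcomm (pcomm a b) b = 1 := by
  have key : ∀ r ∈ relsI α β γ, PresentedGroup.mk (relsI α β γ) r = 1 :=
    fun r hr => PresentedGroup.one_of_mem hr
  refine ⟨key (FreeGroup.of 0 ^ 2 ^ α) ?_, key (FreeGroup.of 1 ^ 2 ^ β) ?_,
    key (pcomm (FreeGroup.of 0) (FreeGroup.of 1) ^ 2 ^ γ) ?_,
    key (pcomm (pcomm (FreeGroup.of 0) (FreeGroup.of 1)) (FreeGroup.of 0)) ?_,
    key (pcomm (pcomm (FreeGroup.of 0) (FreeGroup.of 1)) (FreeGroup.of 1)) ?_⟩ <;>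
  simp [relsI]

theorem map_pcomm' {G H : Type*} [Group G] [Group H] (f : G →* H) (x y : G) :
    f (pcomm x y) = pcomm (f x) (f y) := by simp [pcomm]

theorem dvd_of_pow_eq_one (α β γ m : ℕ)
    (h : (PresentedGroup.of 0 : PresentedGroup (relsI α β γ)) ^ m = 1) : 2 ^ α ∣ m := by
  let f : Fin 2 → Multiplicative (ZMod (2 ^ α)) := ![Multiplicative.ofAdd 1, 1]
  have hf : ∀ r ∈ relsI α β γ, FreeGroup.lift f r = 1 := by
    intro r hr
    simp only [relsI, Set.mem_insert_iff, Set.mem_singleton_iff] at hr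
    have h0 : f 0 ^ 2 ^ α = 1 := by
      simp only [f, Matrix.cons_val_zero, ← ofAdd_nsmul]
      rw [nsmul_eq_mul, ZMod.natCast_self]; simp
    have h1 : f 1 = 1 := rfl
    rcases hr with rfl | rfl | rfl | rfl | rfl <;>
      simp [h0, h1, pcomm]
  have h2 := congrArg (PresentedGroup.toGroup hf) h
  rw [map_pow, PresentedGroup.toGroup.of, map_one] at h2
  simp only [f, Matrix.cons_val_zero, ← ofAdd_nsmul] at h2
  rw [nsmul_eq_mul, mul_one] at h2
  exact (ZMod.natCast_eq_zero_iff _ _).1 h2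

theorem capable_necessary (α β γ : ℕ) (hγβ : γ ≤ β)
    (h : IsCapable (PresentedGroup (relsI α β γ))) : α ≤ β ∨ (α ≤ β + 1 ∧ γ = β) := by
  obtain ⟨K, _, ⟨e⟩⟩ := h
  let φ : K →* PresentedGroup (relsI α β γ) :=
    e.toMonoidHom.comp (QuotientGroup.mk' (Subgroup.center K))
  have hsurj : Function.Surjective φ :=
    e.surjective.comp (QuotientGroup.mk'_surjective _)
  have hker : ∀ k, φ k = 1 ↔ k ∈ Subgroup.center K := by
    intro k
    simp [φ]
  obtain ⟨x, hx⟩ := hsurj (PresentedGroup.of 0)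
  obtain ⟨y, hy⟩ := hsurj (PresentedGroup.of 1)
  obtain ⟨r1, r2, r3, r4, r5⟩ := presented_rels α β γ
  have hcen : ∀ k, φ k = 1 → ∀ g, k * g = g * k := fun k hk g =>
    (Subgroup.mem_center_iff.1 ((hker k).1 hk) g).symm
  have gen : ∀ w : K, w * x = x * w → w * y = y * w → φ w = 1 := by
    intro w h1 h2
    rw [hker, Subgroup.mem_center_iff]
    have htop : (Subgroup.centralizer {w}).map φ = ⊤ := by
      rw [eq_top_iff, ← PresentedGroup.closure_range_of, Subgroup.closure_le]
      rintro _ ⟨i, rfl⟩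
      fin_cases i
      · exact ⟨x, Subgroup.mem_centralizer_singleton_iff.2 h1.symm, hx⟩
      · exact ⟨y, Subgroup.mem_centralizer_singleton_iff.2 h2.symm, hy⟩
    intro g
    have : φ g ∈ (Subgroup.centralizer {w}).map φ := by rw [htop]; trivial
    obtain ⟨k, hk, hkg⟩ := this
    have hk' : k * w = w * k := Subgroup.mem_centralizer_singleton_iff.1 hk
    have hz := hcen (k⁻¹ * g) (by rw [map_mul, map_inv, hkg]; simp) w
    calc g * w = k * (k⁻¹ * g * w) := by group
      _ = (k * w) * (k⁻¹ * g) := by rw [hz]; group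
      _ = w * g := by rw [hk']; group
  set c := pcomm x y with hc
  set u := pcomm c x with hu
  set v := pcomm c y with hv
  have φc : φ c = pcomm (PresentedGroup.of 0) (PresentedGroup.of 1) := by
    rw [hc, map_pcomm', hx, hy]
  have uc : ∀ g, u * g = g * u := hcen _ (by rw [hu, map_pcomm', φc, hx]; exact r4)
  have vc : ∀ g, v * g = g * v := hcen _ (by rw [hv, map_pcomm', φc, hy]; exact r5)
  have ccen := hcen (c ^ 2 ^ γ) (by rw [map_pow, φc]; exact r3)
  have ycen := hcen (y ^ 2 ^ β) (by rw [map_pow, hy]; exact r2)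
  have hxy : x * y = y * x * c := mul_pcomm x y
  have hcx : c * x = x * c * u := mul_pcomm c x
  have hcy : c * y = y * c * v := mul_pcomm c y
  have u1 : u ^ 2 ^ γ = 1 := by
    have := pow_mul_of_comm uc hcx (2 ^ γ)
    rw [ccen] at this
    exact (left_eq_mul.1 this)
  have v1 : v ^ 2 ^ γ = 1 := by
    have := pow_mul_of_comm vc hcy (2 ^ γ)
    rw [ccen] at this
    exact (left_eq_mul.1 this)
  have u0 : ∀ n, 2 ^ γ ∣ n → u ^ n = 1 := fun n hn => by
    obtain ⟨d, rfl⟩ := hn; rw [pow_mul, u1, one_pow]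
  have v0 : ∀ n, 2 ^ γ ∣ n → v ^ n = 1 := fun n hn => by
    obtain ⟨d, rfl⟩ := hn; rw [pow_mul, v1, one_pow]
  have c1 : c ^ 2 ^ β * v ^ (2 ^ β).choose 2 = 1 := by
    have := mul_pow_right' vc hxy hcy (2 ^ β)
    rw [← ycen] at this
    exact left_eq_mul.1 this
  have fin : ∀ n, c ^ n = 1 → u ^ n.choose 2 = 1 → 2 ^ α ∣ n := by
    intro n h1 h2
    apply dvd_of_pow_eq_one α β γ
    rw [← hx, ← map_pow]
    apply gen
    · rw [← pow_succ, ← pow_succ']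
    · rw [pow_mul_left' uc hxy hcx, h1, h2]; simp
  rcases hγβ.lt_or_eq with hlt | heq
  · left
    have hd := choose_two_pow_dvd hlt
    rw [v0 _ hd, mul_one] at c1
    exact (Nat.pow_dvd_pow_iff_le_right (by norm_num)).1 (fin _ c1 (u0 _ hd))
  · right
    refine ⟨?_, heq⟩
    have c2 : c ^ (2 ^ β * 2) = 1 := by
      have h1 : c ^ 2 ^ β = (v ^ (2 ^ β).choose 2)⁻¹ := eq_inv_of_mul_eq_one_left c1
      rw [pow_mul, h1, inv_pow, ← pow_mul, v0, inv_one]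
      rw [heq, mul_comm]; exact dvd_two_mul_choose_two _
    have u2 : u ^ (2 ^ β * 2).choose 2 = 1 := by
      apply u0; rw [heq, mul_comm]; exact dvd_choose_two_two_mul _
    have := fin _ c2 u2
    rw [← pow_succ] at this
    exact (Nat.pow_dvd_pow_iff_le_right (by norm_num)).1 this

/-! ### A criterion for capability -/

theorem normal_form (α β γ : ℕ) (g : PresentedGroup (relsI α β γ)) :
    ∃ i j k : ℕ, g = PresentedGroup.of 0 ^ i * PresentedGroup.of 1 ^ j *
      pcomm (PresentedGroup.of 0) (PresentedGroup.of 1) ^ k := by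
  obtain ⟨r1, r2, r3, r4, r5⟩ := presented_rels α β γ
  set a : PresentedGroup (relsI α β γ) := PresentedGroup.of 0
  set b : PresentedGroup (relsI α β γ) := PresentedGroup.of 1
  set c := pcomm a b with hc
  have ca : Commute c a := by
    have := mul_pcomm c a
    rwa [r4, mul_one] at this
  have cb : Commute c b := by
    have := mul_pcomm c b
    rwa [r5, mul_one] at this
  have hab : b * a = a * b * c⁻¹ := by
    have := mul_pcomm a b
    rw [this, ← hc]; group
  have key : ∃ i j k : ℤ, g = a ^ i * b ^ j * c ^ k := by
    have hg : g ∈ Subgroup.closure (Set.range (PresentedGroup.of (rels := relsI α β γ))) := by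
      rw [PresentedGroup.closure_range_of]; trivial
    have hba : ∀ j : ℤ, b ^ j * a = a * b ^ j * c ^ (-j) := by
      intro j
      have h1 : a⁻¹ * b * a = b * c⁻¹ := by
        rw [mul_assoc, hab]; group
      have h2 : a⁻¹ * b ^ j * a = b ^ j * c ^ (-j) := by
        have := conj_zpow (a := a⁻¹) (b := b) (i := j)
        rw [inv_inv] at this
        rw [← this, h1, cb.symm.inv_right.mul_zpow]; simp
      rw [mul_assoc a, ← h2]; group
    induction hg using Subgroup.closure_induction_right with
    | one => exact ⟨0, 0, 0, by simp⟩
    | mul_right g hg s hs ih =>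
      obtain ⟨i, j, k, rfl⟩ := ih
      obtain ⟨t, rfl⟩ := hs
      fin_cases t
      · refine ⟨i + 1, j, -j + k, ?_⟩
        change a ^ i * b ^ j * c ^ k * a = _
        rw [mul_assoc, (ca.zpow_left k).eq, ← mul_assoc, mul_assoc (a ^ i), hba, zpow_add,
          zpow_add, zpow_one]
        simp only [mul_assoc]
      · refine ⟨i, j + 1, k, ?_⟩
        change a ^ i * b ^ j * c ^ k * b = _
        rw [mul_assoc, (cb.zpow_left k).eq, zpow_add, zpow_one]
        simp only [mul_assoc]
    | mul_inv_cancel g hg s hs ih =>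
      obtain ⟨i, j, k, rfl⟩ := ih
      obtain ⟨t, rfl⟩ := hs
      fin_cases t
      · refine ⟨i - 1, j, j + k, ?_⟩
        change a ^ i * b ^ j * c ^ k * a⁻¹ = _
        have hba' : b ^ j * a⁻¹ = a⁻¹ * b ^ j * c ^ j := by
          rw [mul_inv_eq_iff_eq_mul, mul_assoc, (ca.zpow_left j).eq, ← mul_assoc,
            mul_assoc a⁻¹, hba]
          group
        rw [mul_assoc, (ca.inv_right.zpow_left k).eq, ← mul_assoc, mul_assoc (a ^ i), hba',
          zpow_add, zpow_sub, zpow_one]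
        simp only [mul_assoc]
      · refine ⟨i, j - 1, k, ?_⟩
        change a ^ i * b ^ j * c ^ k * b⁻¹ = _
        rw [mul_assoc, (cb.inv_right.zpow_left k).eq, zpow_sub, zpow_one]
        simp only [mul_assoc]
  obtain ⟨i, j, k, rfl⟩ := key
  have nat : ∀ (w : PresentedGroup (relsI α β γ)) (n : ℕ), w ^ 2 ^ n = 1 → ∀ i : ℤ,
      ∃ j : ℕ, w ^ i = w ^ j := by
    intro w n hw i
    have hw' : IsOfFinOrder w := isOfFinOrder_iff_pow_eq_one.2 ⟨2 ^ n, by positivity, hw⟩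
    obtain ⟨j, hj⟩ := hw'.mem_powers_iff_mem_zpowers.2 ⟨i, rfl⟩
    exact ⟨j, hj.symm⟩
  obtain ⟨i', hi⟩ := nat a α r1 i
  obtain ⟨j', hj⟩ := nat b β r2 j
  obtain ⟨k', hk⟩ := nat c γ r3 k
  exact ⟨i', j', k', by rw [hi, hj, hk]⟩

/-- All five relators, evaluated at `x, y`, commute with `x` and `y`. -/
structure RelsCentral (α β γ : ℕ) {H : Type} [Group H] (x y : H) : Prop where
  xy : Commute (x ^ 2 ^ α) y
  yx : Commute (y ^ 2 ^ β) x
  cx : Commute (pcomm x y ^ 2 ^ γ) x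
  cy : Commute (pcomm x y ^ 2 ^ γ) y
  ux : Commute (pcomm (pcomm x y) x) x
  uy : Commute (pcomm (pcomm x y) x) y
  vx : Commute (pcomm (pcomm x y) y) x
  vy : Commute (pcomm (pcomm x y) y) y

theorem capable_of (α β γ : ℕ) {H : Type} [Group H] (x y : H) (hr : RelsCentral α β γ x y)
    (hinj : ∀ i j k : ℕ, Commute (x ^ i * y ^ j * pcomm x y ^ k) x →
      Commute (x ^ i * y ^ j * pcomm x y ^ k) y → 2 ^ α ∣ i ∧ 2 ^ β ∣ j ∧ 2 ^ γ ∣ k) :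
    IsCapable (PresentedGroup (relsI α β γ)) := by
  let f : FreeGroup (Fin 2) →* H := FreeGroup.lift ![x, y]
  have f0 : f (FreeGroup.of 0) = x := by simp [f]
  have f1 : f (FreeGroup.of 1) = y := by simp [f]
  have comm : ∀ w, Commute (f w) x → Commute (f w) y → ∀ g, Commute (f w) (f g) := by
    intro w h1 h2 g
    induction g using FreeGroup.induction_on with
    | C1 => simp
    | of i => fin_cases i
              · exact f0 ▸ h1
              · exact f1 ▸ h2
    | inv_of i ih => rw [map_inv]; exact ih.inv_right
    | mul g h ih1 ih2 => rw [map_mul]; exact ih1.mul_right ih2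
  let q : FreeGroup (Fin 2) →* f.range ⧸ Subgroup.center f.range :=
    (QuotientGroup.mk' _).comp f.rangeRestrict
  have hq : ∀ w, q w = 1 ↔ (Commute (f w) x ∧ Commute (f w) y) := by
    intro w
    have : q w = 1 ↔ f.rangeRestrict w ∈ Subgroup.center f.range := by
      simp [q]
    rw [this, Subgroup.mem_center_iff]
    constructor
    · intro h
      have h0 := congrArg Subtype.val (h (f.rangeRestrict (FreeGroup.of 0)))
      have h1 := congrArg Subtype.val (h (f.rangeRestrict (FreeGroup.of 1)))
      simp only [Subgroup.coe_mul, MonoidHom.coe_rangeRestrict, f0, f1] at h0 h1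
      exact ⟨h0.symm, h1.symm⟩
    · rintro ⟨h1, h2⟩ ⟨_, g, rfl⟩
      apply Subtype.ext
      exact (comm w h1 h2 g).symm
  have hrel : ∀ r ∈ relsI α β γ, q r = 1 := by
    intro r hr'
    rw [hq]
    simp only [relsI, Set.mem_insert_iff, Set.mem_singleton_iff] at hr'
    rcases hr' with rfl | rfl | rfl | rfl | rfl <;>
      simp only [map_pow, map_pcomm', f0, f1]
    · exact ⟨(Commute.refl x).pow_left _, hr.xy⟩
    · exact ⟨hr.yx, (Commute.refl y).pow_left _⟩
    · exact ⟨hr.cx, hr.cy⟩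
    · exact ⟨hr.ux, hr.uy⟩
    · exact ⟨hr.vx, hr.vy⟩
  have hlift : ∀ r ∈ relsI α β γ, FreeGroup.lift (fun i => q (FreeGroup.of i)) r = 1 := by
    intro r hr'
    have : FreeGroup.lift (fun i => q (FreeGroup.of i)) = q := by
      ext i; simp
    rw [this]; exact hrel r hr'
  let F := PresentedGroup.toGroup hlift
  have hF : ∀ w, F (PresentedGroup.mk _ w) = q w := by
    intro w
    have : F.comp (PresentedGroup.mk _) = q := by
      ext i
      simp only [MonoidHom.comp_apply]
      exact PresentedGroup.toGroup.of hlift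
    rw [← this]; rfl
  have hsurj : Function.Surjective F := by
    intro z
    obtain ⟨⟨_, g, rfl⟩, rfl⟩ := QuotientGroup.mk'_surjective _ z
    exact ⟨PresentedGroup.mk _ g, hF g⟩
  have hinjF : Function.Injective F := by
    rw [injective_iff_map_eq_one]
    intro g hg
    obtain ⟨i, j, k, rfl⟩ := normal_form α β γ g
    have h1 : q (FreeGroup.of 0 ^ i * FreeGroup.of 1 ^ j *
        pcomm (FreeGroup.of 0) (FreeGroup.of 1) ^ k) = 1 := by
      rw [← hF, ← hg]; rfl
    rw [hq] at h1
    simp only [map_mul, map_pow, map_pcomm', f0, f1] at h1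
    obtain ⟨⟨i, rfl⟩, ⟨j, rfl⟩, ⟨k, rfl⟩⟩ := hinj i j k h1.1 h1.2
    obtain ⟨r1, r2, r3, -, -⟩ := presented_rels α β γ
    simp only [pow_mul, r1, r2, r3, one_pow, mul_one]
  exact ⟨f.range, inferInstance,
    ⟨(MulEquiv.ofBijective F ⟨hinjF, hsurj⟩).symm⟩⟩

/-! ### The rings and the affine groups -/

/-- The ideal of all integer polynomials congruent mod `X ^ 3` to
`a * (m X + p X ^ 2) + b * q X ^ 2`. -/
def capIdeal (m p q : ℤ) (hqm : q ∣ m) : Ideal ℤ[X] where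
  carrier := {f | f.coeff 0 = 0 ∧ ∃ a b : ℤ, f.coeff 1 = a * m ∧ f.coeff 2 = a * p + b * q}
  zero_mem' := ⟨by simp, 0, 0, by simp, by simp⟩
  add_mem' := by
    rintro f g ⟨h0, a, b, h1, h2⟩ ⟨k0, c, d, k1, k2⟩
    exact ⟨by simp [h0, k0], a + c, b + d, by rw [coeff_add, h1, k1]; ring,
      by rw [coeff_add, h2, k2]; ring⟩
  smul_mem' := by
    rintro g f ⟨h0, a, b, h1, h2⟩
    obtain ⟨r, rfl⟩ := hqm
    refine ⟨by simp [h0], g.coeff 0 * a, g.coeff 0 * b + g.coeff 1 * a * r, ?_, ?_⟩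
    · rw [smul_eq_mul, mul_coeff_one, h0, h1]; ring
    · rw [smul_eq_mul, coeff_mul]
      simp [Finset.Nat.antidiagonal_succ, h0, h1, h2]
      ring

theorem exists_capRing (m p q : ℤ) (hqm : q ∣ m) :
    ∃ (R : Type) (_ : CommRing R) (T : R), T ^ 3 = 0 ∧ ∀ i j k : ℤ,
      ((i : R) + j * T + k * T ^ 2 = 0 ↔ i = 0 ∧ ∃ a b : ℤ, j = a * m ∧ k = a * p + b * q) := by
  refine ⟨ℤ[X] ⧸ capIdeal m p q hqm, inferInstance, Ideal.Quotient.mk _ X, ?_, ?_⟩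
  · rw [← map_pow, Ideal.Quotient.eq_zero_iff_mem]
    exact ⟨by simp, 0, 0, by simp [coeff_X_pow], by simp [coeff_X_pow]⟩
  · intro i j k
    have : ((i : ℤ[X] ⧸ capIdeal m p q hqm) +
        (j : ℤ[X] ⧸ capIdeal m p q hqm) * Ideal.Quotient.mk (capIdeal m p q hqm) X +
        (k : ℤ[X] ⧸ capIdeal m p q hqm) * (Ideal.Quotient.mk (capIdeal m p q hqm) X) ^ 2) =
        Ideal.Quotient.mk (capIdeal m p q hqm) (C i + C j * X + C k * X ^ 2) := by
      simp
    rw [this, Ideal.Quotient.eq_zero_iff_mem]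
    change (_ ∧ _) ↔ _
    have c0 : (C i + C j * X + C k * X ^ 2 : ℤ[X]).coeff 0 = i := by
      simp [coeff_X, coeff_C, coeff_X_pow, -eq_intCast]
    have c1 : (C i + C j * X + C k * X ^ 2 : ℤ[X]).coeff 1 = j := by
      simp [coeff_X, coeff_C, coeff_X_pow, -eq_intCast]
    have c2 : (C i + C j * X + C k * X ^ 2 : ℤ[X]).coeff 2 = k := by
      simp [coeff_X, coeff_C, coeff_X_pow, -eq_intCast]
    rw [c0, c1, c2]

/-- The affine permutation `v ↦ u v + w`. -/
def aff {R : Type} [CommRing R] (u : Rˣ) (w : R) : Equiv.Perm R where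
  toFun v := u * v + w
  invFun v := (u⁻¹ : Rˣ) * (v - w)
  left_inv v := by simp
  right_inv v := by simp

section affine

variable {R : Type} [CommRing R]

theorem aff_mul (u u' : Rˣ) (w w' : R) :
    aff u w * aff u' w' = aff (u * u') (u * w' + w) := by
  ext v
  simp [aff]; ring

theorem aff_inj {u u' : Rˣ} {w w' : R} : aff u w = aff u' w' ↔ u = u' ∧ w = w' := by
  constructor
  · intro h
    have h0 := congrArg (fun e : Equiv.Perm R => e 0) h
    have h1 := congrArg (fun e : Equiv.Perm R => e 1) h
    simp only [aff, Equiv.coe_fn_mk, mul_zero, zero_add, mul_one] at h0 h1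
    refine ⟨Units.ext ?_, h0⟩
    rw [h0] at h1
    exact add_right_cancel h1
  · rintro ⟨rfl, rfl⟩; rfl

theorem aff_commute {u u' : Rˣ} {w w' : R} :
    Commute (aff u w) (aff u' w') ↔ (u : R) * w' + w = u' * w + w' := by
  rw [commute_iff_eq, aff_mul, aff_mul, aff_inj]
  simp [mul_comm u]

theorem aff_one_zero : aff (1 : Rˣ) (0 : R) = 1 := by
  ext v; simp [aff]

theorem aff_one_pow (w : R) (n : ℕ) : aff 1 w ^ n = aff 1 (n * w) := by
  induction n with
  | zero => simp [aff_one_zero]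
  | succ n ih => rw [pow_succ, ih, aff_mul, aff_inj]; simp; ring

theorem aff_zero_pow (u : Rˣ) (n : ℕ) : aff u 0 ^ n = aff (u ^ n) 0 := by
  induction n with
  | zero => simp [aff_one_zero]
  | succ n ih => rw [pow_succ, ih, aff_mul, aff_inj]; simp [pow_succ]

theorem aff_pow (u : Rˣ) (n : ℕ) :
    ∃ w : R, aff u 1 ^ n = aff (u ^ n) w ∧ ((u : R) - 1) * w = u ^ n - 1 := by
  induction n with
  | zero => exact ⟨0, by simp [aff_one_zero], by simp⟩
  | succ n ih =>
    obtain ⟨w, h1, h2⟩ := ih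
    refine ⟨u ^ n + w, ?_, ?_⟩
    · rw [pow_succ, h1, aff_mul, aff_inj]; simp [pow_succ]
    · rw [mul_add, h2]; ring

theorem unip_pow {T : R} (hT : T ^ 3 = 0) (n : ℕ) :
    (1 + T) ^ n = 1 + n * T + (n.choose 2 : ℕ) * T ^ 2 := by
  induction n with
  | zero => simp
  | succ n ih =>
    rw [pow_succ, ih, Nat.choose_succ_succ' n 1]
    push_cast
    simp only [Nat.choose_one_right]
    linear_combination ((n.choose 2 : ℕ) : R) * hT

theorem exists_unip {T : R} (hT : T ^ 3 = 0) : ∃ U : Rˣ, (U : R) = 1 + T :=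
  ⟨⟨1 + T, 1 - T + T ^ 2, by linear_combination hT, by linear_combination hT⟩, rfl⟩

end affine

theorem choose_two_mul (a m : ℤ) (n M : ℕ) (hn : (n : ℤ) = a * m) (hM : (M : ℤ) = m) :
    ∃ d : ℤ, ((n.choose 2 : ℕ) : ℤ) = a * ((M.choose 2 : ℕ) : ℤ) + d * m := by
  have h1 := two_mul_choose_two n
  have h2 := two_mul_choose_two M
  obtain ⟨e, he⟩ : (2 : ℤ) ∣ a * (a - 1) := (Int.even_mul_pred_self a).two_dvd
  refine ⟨e * m, ?_⟩
  rw [hn] at h1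
  rw [hM] at h2
  apply mul_left_cancel₀ (two_ne_zero : (2 : ℤ) ≠ 0)
  linear_combination h1 - a * h2 + m ^ 2 * he

/-! ### The case of equal exponents -/

theorem capable_case_one (n γ : ℕ) (hγ : γ ≤ n) :
    IsCapable (PresentedGroup (relsI n n γ)) := by
  obtain ⟨R, _, T, hT, hR⟩ := exists_capRing ((2 ^ n : ℕ) : ℤ) (((2 ^ n).choose 2 : ℕ) : ℤ)
    ((2 ^ γ : ℕ) : ℤ) (by exact_mod_cast pow_dvd_pow 2 hγ)
  obtain ⟨U, hU⟩ := exists_unip hT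
  have hpow : ∀ k : ℕ, (U : R) ^ k = 1 + k * T + (k.choose 2 : ℕ) * T ^ 2 := fun k => by
    rw [hU]; exact unip_pow hT k
  have hUm : (U : R) ^ 2 ^ n = 1 := by
    have := (hR 0 (2 ^ n : ℕ) ((2 ^ n).choose 2 : ℕ)).2 ⟨rfl, 1, 0, by simp, by simp⟩
    rw [hpow]
    push_cast at this ⊢
    linear_combination this
  have hq : ((2 ^ γ : ℕ) : R) * T ^ 2 = 0 := by
    have := (hR 0 0 (2 ^ γ : ℕ)).2 ⟨rfl, 0, 1, by simp, by simp⟩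
    push_cast at this ⊢
    linear_combination this
  have hc : pcomm (aff U 1) (aff U 0) = aff 1 (-T + 2 * T ^ 2) := by
    apply pcomm_eq_of
    rw [aff_mul, aff_mul, aff_mul, aff_inj, hU]
    refine ⟨by simp, ?_⟩
    push_cast
    rw [hU]
    linear_combination (-3 - 2 * T) * hT
  have hu : pcomm (aff 1 (-T + 2 * T ^ 2)) (aff U 1) = aff 1 (T ^ 2) := by
    apply pcomm_eq_of
    rw [aff_mul, aff_mul, aff_mul, aff_inj]
    refine ⟨by simp, ?_⟩
    push_cast
    rw [hU]
    linear_combination (-3) * hT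
  have hv : pcomm (aff 1 (-T + 2 * T ^ 2)) (aff U 0) = aff 1 (T ^ 2) := by
    apply pcomm_eq_of
    rw [aff_mul, aff_mul, aff_mul, aff_inj]
    refine ⟨by simp, ?_⟩
    push_cast
    rw [hU]
    linear_combination (-3) * hT
  apply capable_of n n γ (aff U 1) (aff U 0)
  · obtain ⟨w, hw1, hw2⟩ := aff_pow U (2 ^ n)
    rw [hUm, hU] at hw2
    constructor
    · rw [hw1, aff_commute, hU]
      linear_combination -hw2
    · rw [aff_zero_pow, aff_commute]
      push_cast
      rw [hUm]; ring
    · rw [hc, aff_one_pow, aff_commute, hU]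
      push_cast at hq ⊢
      linear_combination hq - 2 * (2 : R) ^ γ * hT
    · rw [hc, aff_one_pow, aff_commute, hU]
      push_cast at hq ⊢
      linear_combination hq - 2 * (2 : R) ^ γ * hT
    · rw [hc, hu, aff_commute, hU]; push_cast; linear_combination -hT
    · rw [hc, hu, aff_commute, hU]; push_cast; linear_combination -hT
    · rw [hc, hv, aff_commute, hU]; push_cast; linear_combination -hT
    · rw [hc, hv, aff_commute, hU]; push_cast; linear_combination -hT
  · intro i j k h1 h2
    obtain ⟨w, hw1, hw2⟩ := aff_pow U i
    rw [hc, hw1, aff_zero_pow, aff_one_pow, aff_mul, aff_mul, aff_commute] at h1 h2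
    push_cast at h1 h2
    have h3 := hpow (i + j)
    rw [← pow_add] at h1 h2
    rw [h3, hU] at h1 h2
    rw [hpow, hU] at hw2
    have e1 : ((i + j : ℕ) : R) * T + ((i + j).choose 2 : ℕ) * T ^ 2 = 0 := by
      push_cast at h1 h2 ⊢
      linear_combination h1 - h2
    have e2 : (i : R) * T + ((i.choose 2 : ℕ) - k) * T ^ 2 = 0 := by
      push_cast at h1 h2 ⊢
      linear_combination -h2 - hw2 - (k : R) * ((2 - (i + j)) +
        (2 * (i + j) - ((i + j).choose 2 : ℕ)) * T + 2 * ((i + j).choose 2 : ℕ) * T ^ 2) * hT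
    obtain ⟨-, a, b, ha, hb⟩ := (hR 0 (i : ℤ) ((i.choose 2 : ℕ) - k : ℤ)).1 (by
      push_cast; linear_combination e2)
    obtain ⟨-, a', b', ha', -⟩ := (hR 0 ((i + j : ℕ) : ℤ) ((i + j).choose 2 : ℕ)).1 (by
      push_cast at e1 ⊢; linear_combination e1)
    refine ⟨?_, ?_, ?_⟩
    · have : ((2 ^ n : ℕ) : ℤ) ∣ i := ⟨a, by rw [ha]; ring⟩
      exact_mod_cast this
    · have : ((2 ^ n : ℕ) : ℤ) ∣ j := ⟨a' - a, by push_cast at ha ha' ⊢; linarith⟩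
      exact_mod_cast this
    · obtain ⟨d, hd⟩ := choose_two_mul a _ i (2 ^ n) ha rfl
      have h5 : ((2 ^ γ : ℕ) : ℤ) ∣ ((2 ^ n : ℕ) : ℤ) := by exact_mod_cast pow_dvd_pow 2 hγ
      have : ((2 ^ γ : ℕ) : ℤ) ∣ k := by
        obtain ⟨r, hr⟩ := h5
        refine ⟨d * r - b, ?_⟩
        rw [hr] at hd
        linarith
      exact_mod_cast this

/-! ### The case `α = β + 1`, `γ = β` -/

theorem case_two_first (n : ℕ) :
    ∃ (H : Type) (_ : Group H) (x y : H), RelsCentral (n + 1) n n x y ∧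
      ∀ i j k : ℕ, Commute (x ^ i * y ^ j * pcomm x y ^ k) x →
      Commute (x ^ i * y ^ j * pcomm x y ^ k) y → ∃ a b : ℤ, (i : ℤ) = a * (2 ^ n : ℕ) ∧
        -(k : ℤ) = a * ((2 ^ n).choose 2 : ℕ) + b * (2 ^ n : ℕ) := by
  obtain ⟨R, _, T, hT, hR⟩ := exists_capRing ((2 ^ n : ℕ) : ℤ) (((2 ^ n).choose 2 : ℕ) : ℤ)
    ((2 ^ n : ℕ) : ℤ) dvd_rfl
  obtain ⟨U, hU⟩ := exists_unip hT
  have hpow : ∀ k : ℕ, (U : R) ^ k = 1 + k * T + (k.choose 2 : ℕ) * T ^ 2 := fun k => by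
    rw [hU]; exact unip_pow hT k
  have hUm : (U : R) ^ 2 ^ n = 1 := by
    have := (hR 0 (2 ^ n : ℕ) ((2 ^ n).choose 2 : ℕ)).2 ⟨rfl, 1, 0, by simp, by simp⟩
    rw [hpow]
    push_cast at this ⊢
    linear_combination this
  have hq : ((2 ^ n : ℕ) : R) * T ^ 2 = 0 := by
    have := (hR 0 0 (2 ^ n : ℕ)).2 ⟨rfl, 0, 1, by simp, by simp⟩
    push_cast at this ⊢
    linear_combination this
  have hq2 : ((2 ^ (n + 1) : ℕ) : R) * T = 0 := by
    have h2 := two_mul_choose_two (2 ^ n)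
    have := (hR 0 (2 ^ (n + 1) : ℕ) 0).2 ⟨rfl, 2, -((2 ^ n : ℕ) - 1), by push_cast; ring, by
      linarith⟩
    push_cast at this ⊢
    linear_combination this
  have hc : pcomm (aff 1 1) (aff U 0) = aff 1 (-T + T ^ 2) := by
    apply pcomm_eq_of
    rw [aff_mul, aff_mul, aff_mul, aff_inj]
    refine ⟨by simp, ?_⟩
    push_cast
    rw [hU]
    linear_combination (-1) * hT
  have hu : pcomm (aff 1 (-T + T ^ 2)) (aff (1 : Rˣ) 1) = aff 1 0 := by
    apply pcomm_eq_of
    rw [aff_mul, aff_mul, aff_mul, aff_inj]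
    refine ⟨by simp, ?_⟩
    push_cast
    ring
  have hv : pcomm (aff 1 (-T + T ^ 2)) (aff U 0) = aff 1 (T ^ 2) := by
    apply pcomm_eq_of
    rw [aff_mul, aff_mul, aff_mul, aff_inj]
    refine ⟨by simp, ?_⟩
    push_cast
    rw [hU]
    linear_combination (-2) * hT
  refine ⟨Equiv.Perm R, inferInstance, aff 1 1, aff U 0, ?_, ?_⟩
  · constructor
    · rw [aff_one_pow, aff_commute, hU]
      push_cast at hq2 ⊢
      linear_combination -hq2
    · rw [aff_zero_pow, aff_commute]
      push_cast
      rw [hUm]; ring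
    · rw [hc, aff_one_pow, aff_commute]
      push_cast
      ring
    · rw [hc, aff_one_pow, aff_commute, hU]
      push_cast at hq ⊢
      linear_combination hq - (2 : R) ^ n * hT
    · rw [hc, hu, aff_one_zero]; exact Commute.one_left _
    · rw [hc, hu, aff_one_zero]; exact Commute.one_left _
    · rw [hc, hv, aff_commute]; push_cast; ring
    · rw [hc, hv, aff_commute, hU]; push_cast; linear_combination -hT
  · intro i j k h1 h2
    rw [hc, aff_one_pow, aff_zero_pow, aff_one_pow, aff_mul, aff_mul, aff_commute] at h2
    push_cast at h2
    rw [hpow, hU] at h2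
    have e2 : (i : R) * T - k * T ^ 2 = 0 := by
      linear_combination -h2 - (k : R) * ((1 - j) + (j - (j.choose 2 : ℕ)) * T +
        (j.choose 2 : ℕ) * T ^ 2) * hT
    obtain ⟨-, a, b, ha, hb⟩ := (hR 0 (i : ℤ) (-(k : ℤ))).1 (by
      push_cast; linear_combination e2)
    exact ⟨a, b, ha, hb⟩

theorem case_two_second (n : ℕ) :
    ∃ (H : Type) (_ : Group H) (x y : H), RelsCentral (n + 1) n n x y ∧
      ∀ i j k : ℕ, Commute (x ^ i * y ^ j * pcomm x y ^ k) x →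
      Commute (x ^ i * y ^ j * pcomm x y ^ k) y → 2 ^ n ∣ j ∧ 2 ^ n ∣ k := by
  obtain ⟨R, _, T, hT, hR⟩ := exists_capRing ((2 ^ n : ℕ) : ℤ) 0 ((2 ^ n : ℕ) : ℤ) dvd_rfl
  obtain ⟨U, hU⟩ := exists_unip hT
  have hpow : ∀ k : ℕ, (U : R) ^ k = 1 + k * T + (k.choose 2 : ℕ) * T ^ 2 := fun k => by
    rw [hU]; exact unip_pow hT k
  have hUm : (U : R) ^ 2 ^ (n + 1) = 1 := by
    obtain ⟨d, hd⟩ := dvd_choose_two_two_mul (2 ^ n)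
    have := (hR 0 (2 ^ (n + 1) : ℕ) ((2 ^ (n + 1)).choose 2 : ℕ)).2 ⟨rfl, 2, d, by
      push_cast; ring, by rw [pow_succ', hd]; push_cast; ring⟩
    rw [hpow]
    push_cast at this ⊢
    linear_combination this
  have hq : ((2 ^ n : ℕ) : R) * T ^ 2 = 0 := by
    have := (hR 0 0 (2 ^ n : ℕ)).2 ⟨rfl, 0, 1, by simp, by simp⟩
    push_cast at this ⊢
    linear_combination this
  have hq2 : ((2 ^ n : ℕ) : R) * T = 0 := by
    have := (hR 0 (2 ^ n : ℕ) 0).2 ⟨rfl, 1, 0, by simp, by simp⟩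
    push_cast at this ⊢
    linear_combination this
  have hc : pcomm (aff U 0) (aff 1 1) = aff 1 (T - T ^ 2) := by
    apply pcomm_eq_of
    rw [aff_mul, aff_mul, aff_mul, aff_inj]
    refine ⟨by simp, ?_⟩
    push_cast
    rw [hU]
    linear_combination hT
  have hv : pcomm (aff 1 (T - T ^ 2)) (aff (1 : Rˣ) 1) = aff 1 0 := by
    apply pcomm_eq_of
    rw [aff_mul, aff_mul, aff_mul, aff_inj]
    refine ⟨by simp, ?_⟩
    push_cast
    ring
  have hu : pcomm (aff 1 (T - T ^ 2)) (aff U 0) = aff 1 (-T ^ 2) := by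
    apply pcomm_eq_of
    rw [aff_mul, aff_mul, aff_mul, aff_inj]
    refine ⟨by simp, ?_⟩
    push_cast
    rw [hU]
    linear_combination 2 * hT
  refine ⟨Equiv.Perm R, inferInstance, aff U 0, aff 1 1, ?_, ?_⟩
  · constructor
    · rw [aff_zero_pow, aff_commute]
      push_cast
      rw [hUm]; ring
    · rw [aff_one_pow, aff_commute, hU]
      push_cast at hq2 ⊢
      linear_combination -hq2
    · rw [hc, aff_one_pow, aff_commute, hU]
      push_cast at hq ⊢
      linear_combination -hq + (2 : R) ^ n * hT
    · rw [hc, aff_one_pow, aff_commute]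
      push_cast
      ring
    · rw [hc, hu, aff_commute, hU]; push_cast; linear_combination hT
    · rw [hc, hu, aff_commute]; push_cast; ring
    · rw [hc, hv, aff_one_zero]; exact Commute.one_left _
    · rw [hc, hv, aff_one_zero]; exact Commute.one_left _
  · intro i j k h1 h2
    rw [hc, aff_one_pow, aff_zero_pow, aff_one_pow, aff_mul, aff_mul, aff_commute] at h1
    push_cast at h1
    rw [hpow, hU] at h1
    have e2 : (j : R) * T + (i * j + k) * T ^ 2 = 0 := by
      linear_combination -h1 - ((-k + i * k + (i.choose 2 : ℕ) * j) +
        (-i * k + (i.choose 2 : ℕ) * k) * T - (i.choose 2 : ℕ) * k * T ^ 2) * hT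
    obtain ⟨-, a, b, ha, hb⟩ := (hR 0 (j : ℤ) (i * j + k : ℤ)).1 (by
      push_cast; linear_combination e2)
    constructor
    · have : ((2 ^ n : ℕ) : ℤ) ∣ j := ⟨a, by rw [ha]; ring⟩
      exact_mod_cast this
    · have : ((2 ^ n : ℕ) : ℤ) ∣ k := ⟨b - i * a, by rw [ha] at hb; linarith⟩
      exact_mod_cast this

theorem prod_commute {G H : Type} [Group G] [Group H] {p q : G × H} :
    Commute p q ↔ Commute p.1 q.1 ∧ Commute p.2 q.2 := by
  simp [commute_iff_eq, Prod.ext_iff]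

theorem capable_case_two (n : ℕ) (hn : 1 ≤ n) :
    IsCapable (PresentedGroup (relsI (n + 1) n n)) := by
  obtain ⟨H₁, _, x₁, y₁, r₁, h₁⟩ := case_two_first n
  obtain ⟨H₂, _, x₂, y₂, r₂, h₂⟩ := case_two_second n
  apply capable_of (n + 1) n n ((x₁, x₂) : H₁ × H₂) (y₁, y₂)
  · constructor <;> rw [prod_commute]
    · exact ⟨r₁.xy, r₂.xy⟩
    · exact ⟨r₁.yx, r₂.yx⟩
    · exact ⟨r₁.cx, r₂.cx⟩
    · exact ⟨r₁.cy, r₂.cy⟩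
    · exact ⟨r₁.ux, r₂.ux⟩
    · exact ⟨r₁.uy, r₂.uy⟩
    · exact ⟨r₁.vx, r₂.vx⟩
    · exact ⟨r₁.vy, r₂.vy⟩
  · intro i j k hx hy
    rw [prod_commute] at hx hy
    obtain ⟨a, b, ha, hb⟩ := h₁ i j k hx.1 hy.1
    obtain ⟨hj, hk⟩ := h₂ i j k hx.2 hy.2
    refine ⟨?_, hj, hk⟩
    obtain ⟨d, rfl⟩ := hk
    obtain ⟨n, rfl⟩ : ∃ l, n = l + 1 := ⟨n - 1, by omega⟩
    have h2 := two_mul_choose_two (2 ^ (n + 1))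
    have hpos : (0 : ℤ) < 2 ^ n := by positivity
    have h3 : ((2 ^ (n + 1)).choose 2 : ℤ) = 2 ^ n * (2 ^ (n + 1) - 1) := by
      push_cast at h2
      have : (2 : ℤ) ^ (n + 1) = 2 * 2 ^ n := by ring
      rw [this] at h2 ⊢
      linarith
    rw [h3] at hb
    have h4 : a = 2 * (a * 2 ^ n + b + d) := by
      apply mul_left_cancel₀ hpos.ne'
      push_cast at hb
      have : (2 : ℤ) ^ (n + 1) = 2 * 2 ^ n := by ring
      rw [this] at hb
      linarith
    have : ((2 ^ (n + 1 + 1) : ℕ) : ℤ) ∣ i := by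
      refine ⟨a * 2 ^ n + b + d, ?_⟩
      rw [ha]
      nth_rewrite 1 [h4]
      push_cast
      ring
    exact_mod_cast this

end CapAux

/-- A coproduct type group `⟨a,b | a^(2^α) = b^(2^β) = [a,b]^(2^γ) = [a,b,a] =
[a,b,b] = e⟩` with `α ≥ β ≥ γ ≥ 1` is capable if and only if `α = β`, or
`α = β + 1` and `γ = β`. -/
theorem coproduct_type_capable_iff (α β γ : ℕ)
    (hγ : 1 ≤ γ) (hγβ : γ ≤ β) (hβα : β ≤ α) :
    IsCapable (PresentedGroup (relsI α β γ)) ↔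
      (α = β ∨ (α = β + 1 ∧ γ = β)) := by
  constructor
  · intro h
    rcases capable_necessary α β γ hγβ h with h1 | ⟨h1, h2⟩
    · left; omega
    · omega
  · rintro (rfl | ⟨rfl, rfl⟩)
    · exact capable_case_one _ γ hγβ
    · exact capable_case_two _ hγ
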